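/- Assume conditions (P) and (S), define τ = (τ₁, τ₂) by τ_i = sup{θ_i : θ ∈ 𝒟^(1) ∩ 𝒟^(2)} for i = 1, 2, and let v ∈ ℝ² with v₁ ≥ 0 and v₂ ≥ 0. If τ ∉ Γ, then min(sup{⟨v, θ⟩ : θ ∈ 𝒟^(1)}, sup{⟨v, θ⟩ : θ ∈ 𝒟^(2)}) = sup{⟨v, θ⟩ : θ ∈ 𝒟^(1) ∩ 𝒟^(2)}. If τ ∈ Γ, then min(sup{⟨v, θ⟩ : θ ∈ 𝒟^(1)}, sup{⟨v, θ⟩ : θ ∈ 𝒟^(2)}) = min(⟨v, θ̃^(1,r)⟩, ⟨v, θ̃^(2,r)⟩). -/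

import Mathlib

/-!
Let `K = (c₁, c₂)` be the corner made of the two truncation levels `c₁ = θ^(1,Γ)₁`, `c₂ = θ^(2,Γ)₂`;
condition (S) makes both positive. Only three features of `Γ` are needed besides boundedness:
`γ` is concave, `Γ` is open, and `γ(0) = 0`.

* `τ ∈ Γ` holds exactly when `K ∈ Γ`, and then `τ = K` (`corner_mem_of_sup_mem`,
  `sup_eq_corner`): every point of `Γ` strictly inside the box `θ < K` lies in `𝒟⁽¹⁾ ∩ 𝒟⁽²⁾`.
* If `K ∉ Γ`, take `P ∈ 𝒟⁽¹⁾` and `Q ∈ 𝒟⁽²⁾`. Either one of them lies in both sets, or they are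
  dominated by `A, B ∈ Γ` lying on opposite sides of the corner. The segment `AB` must pass
  strictly below `K`, since otherwise `K` would lie in the triangle of `0`, `A`, `B` and hence in `Γ`
  (`segment_below_or_corner`). So a point of `PQ` lies in both sets, and the functional there is at
  least its minimum over `P, Q`.
* If `K ∈ Γ`, then `c₁` is strictly below the maximum of the first coordinate, so `θ^(1,Γ)` is
  `θ^(1,r)`. It lies below `K` on the vertical line through `K`, so that `θ̃^(1,r)` lies above `K`
  (`conjugate_above`). If both suprema exceeded `⟨v, θ̃^(1,r)⟩`, a segment joining two points
  witnessing this would cross the vertical line above `θ̃^(1,r)` inside `Γ`, forcing `θ̃^(1,r) ∈ Γ`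
  (`le_conjugate`). Conversely `θ̃^(i,r)` is a limit of points of `Γ` with `i`-th coordinate below
  `c_i`. The other coordinate is symmetric.
-/

open Matrix Set

noncomputable section

abbrev V : Type := Fin 2 → ℝ

def gam (S : Matrix (Fin 2) (Fin 2) ℝ) (μ : V) (θ : V) : ℝ :=
  -(1/2) * (θ ⬝ᵥ S.mulVec θ) - μ ⬝ᵥ θ

def gam1 (R : Matrix (Fin 2) (Fin 2) ℝ) (θ : V) : ℝ := R 0 0 * θ 0 + R 1 0 * θ 1
def gam2 (R : Matrix (Fin 2) (Fin 2) ℝ) (θ : V) : ℝ := R 0 1 * θ 0 + R 1 1 * θ 1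

def condP (R : Matrix (Fin 2) (Fin 2) ℝ) : Prop :=
  0 < R 0 0 ∧ 0 < R 1 1 ∧ 0 < R 0 0 * R 1 1 - R 0 1 * R 1 0

def condS (μ : V) (R : Matrix (Fin 2) (Fin 2) ℝ) : Prop :=
  R 1 1 * μ 0 - R 0 1 * μ 1 < 0 ∧ R 0 0 * μ 1 - R 1 0 * μ 0 < 0

def pvec1 (R : Matrix (Fin 2) (Fin 2) ℝ) : V := ![R 1 1, -(R 0 1)]
def pvec2 (R : Matrix (Fin 2) (Fin 2) ℝ) : V := ![-(R 1 0), R 0 0]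

def θray1 (S : Matrix (Fin 2) (Fin 2) ℝ) (μ : V) (R : Matrix (Fin 2) (Fin 2) ℝ) : V :=
  (-2 * (μ ⬝ᵥ pvec1 R) / (pvec1 R ⬝ᵥ S.mulVec (pvec1 R))) • pvec1 R

def θray2 (S : Matrix (Fin 2) (Fin 2) ℝ) (μ : V) (R : Matrix (Fin 2) (Fin 2) ℝ) : V :=
  (-2 * (μ ⬝ᵥ pvec2 R) / (pvec2 R ⬝ᵥ S.mulVec (pvec2 R))) • pvec2 R

def Gam (S : Matrix (Fin 2) (Fin 2) ℝ) (μ : V) : Set V := {θ | 0 < gam S μ θ}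

def ltc (θ θ' : V) : Prop := ∀ i, θ i < θ' i

def Gmax (S : Matrix (Fin 2) (Fin 2) ℝ) (μ : V) : Set V :=
  {θ | ∃ θ' ∈ Gam S μ, ltc θ θ'}

def Dset (S : Matrix (Fin 2) (Fin 2) ℝ) (μ : V) (i : Fin 2) (c : ℝ) : Set V :=
  {θ | ∃ θ' ∈ Gam S μ, ltc θ θ' ∧ θ' i < c}

/-- Concavity of a function of two real variables, in coordinates; this form is stable under
swapping the variables. -/
def Conc (g : ℝ → ℝ → ℝ) : Prop :=
  ∀ x y x' y' t, 0 ≤ t → t ≤ 1 →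
    (1 - t) * g x y + t * g x' y' ≤ g ((1 - t) * x + t * x') ((1 - t) * y + t * y')

lemma Conc.swap {g : ℝ → ℝ → ℝ} (h : Conc g) : Conc (fun x y => g y x) :=
  fun x y x' y' t h0 h1 => h y x y' x' t h0 h1

/-- On a vertical line, a zero of a concave function cannot lie strictly between a positive point
and a nonnegative one. -/
lemma Conc.not_between {g : ℝ → ℝ → ℝ} (h : Conc g) {c k y z : ℝ} (hk : 0 < g c k)
    (hz : 0 ≤ g c z) (hy : g c y = 0) : ¬ (k ≤ y ∧ y < z) ∧ ¬ (z < y ∧ y ≤ k) := by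
  have key : ∀ t, 0 ≤ t → t < 1 → (1 - t) * k + t * z = y → False := by
    intro t h0 h1 e
    have := h c k c z t h0 h1.le
    rw [e, show (1 - t) * c + t * c = c by ring, hy] at this
    nlinarith [mul_pos (sub_pos.2 h1) hk, mul_nonneg h0 hz]
  constructor
  · rintro ⟨h1, h2⟩
    have hd : 0 < z - k := by linarith
    refine key ((y - k) / (z - k)) (div_nonneg (by linarith) hd.le)
      ((div_lt_one hd).2 (by linarith)) ?_
    field_simp
    ring
  · rintro ⟨h1, h2⟩
    have hd : 0 < k - z := by linarith
    refine key ((k - y) / (k - z)) (div_nonneg (by linarith) hd.le)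
      ((div_lt_one hd).2 (by linarith)) ?_
    field_simp
    ring

/-- A segment joining two points of `{g > 0}` on opposite sides of the corner `(c₁, c₂)` either
enters the open box below the corner, or the corner lies in the triangle spanned by the segment
and the origin, whence `g c₁ c₂ > 0`. -/
lemma segment_below_or_corner {g : ℝ → ℝ → ℝ} (h : Conc g) (h0 : g 0 0 = 0)
    {c₁ c₂ p p' q q' : ℝ} (hc₁ : 0 < c₁) (hc₂ : 0 < c₂) (hp : 0 < g p p') (hq : 0 < g q q')
    (hpc : p < c₁) (hqc : c₁ ≤ q) (hqc' : q' < c₂) (hpc' : c₂ ≤ p') :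
    (∃ t, 0 ≤ t ∧ t ≤ 1 ∧ (1 - t) * p + t * q < c₁ ∧ (1 - t) * p' + t * q' < c₂) ∨
      0 < g c₁ c₂ := by
  have hA : 0 < q - p := by linarith
  have hB : 0 < p' - q' := by linarith
  -- compare the corner with the line `PQ`, whose normal `(p' - q', q - p)` is positive
  rcases lt_or_ge ((p' - q') * p + (q - p) * p') ((p' - q') * c₁ + (q - p) * c₂) with hlt | hge
  · left
    have hBA : (p' - c₂) / (p' - q') < (c₁ - p) / (q - p) := by
      rw [div_lt_div_iff₀ hB hA]; nlinarith
    have hA1 : (c₁ - p) / (q - p) ≤ 1 := (div_le_one hA).2 (by linarith)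
    have hB0 : 0 ≤ (p' - c₂) / (p' - q') := div_nonneg (by linarith) hB.le
    obtain ⟨t, ht1, ht2⟩ := exists_between hBA
    refine ⟨t, by linarith, by linarith, ?_, ?_⟩
    · rw [lt_div_iff₀ hA] at ht2; linarith
    · rw [div_lt_iff₀ hB] at ht1; linarith
  · right
    have hK : 0 < (p' - q') * c₁ + (q - p) * c₂ := by positivity
    set nK := (p' - q') * c₁ + (q - p) * c₂ with hnK
    set nP := (p' - q') * p + (q - p) * p' with hnP
    have hPpos : 0 < nP := by linarith
    -- `(nP / nK) K` lies on the segment `PQ`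
    have hr : 1 ≤ nP / nK := (one_le_div hK).2 hge
    set r := nP / nK with hrdef
    have hrK : r * nK = nP := by rw [hrdef]; field_simp
    have hr1 : c₁ ≤ r * c₁ := by nlinarith
    have hr2 : c₂ ≤ r * c₂ := by nlinarith
    set t := (r * c₁ - p) / (q - p) with ht
    have htm : t * (q - p) = r * c₁ - p := by rw [ht]; field_simp
    have hline : (p' - q') * (r * c₁ - p) = (q - p) * (p' - r * c₂) := by
      rw [hnK, hnP] at hrK; linarith
    have htm' : t * (p' - q') = p' - r * c₂ := by
      have : (q - p) * (t * (p' - q')) = (q - p) * (p' - r * c₂) := by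
        rw [← hline, ← htm]; ring
      exact mul_left_cancel₀ hA.ne' this
    have ht0 : 0 ≤ t := div_nonneg (by linarith) hA.le
    have ht1 : t ≤ 1 := by
      by_contra! hcon
      nlinarith
    have h1 := h p p' q q' t ht0 ht1
    rw [show (1 - t) * p + t * q = r * c₁ by linarith,
      show (1 - t) * p' + t * q' = r * c₂ by linarith] at h1
    have hpos : 0 < g (r * c₁) (r * c₂) := by
      refine lt_of_lt_of_le ?_ h1
      rcases ht1.lt_or_eq with h2 | h2
      · have := mul_pos (sub_pos.2 h2) hp
        have := mul_nonneg ht0 hq.le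
        linarith
      · rw [h2]; linarith
    have hr0 : 0 < r := by linarith
    have h2 := h 0 0 (r * c₁) (r * c₂) r⁻¹ (by positivity) (inv_le_one_of_one_le₀ hr)
    simp only [h0, mul_zero, zero_add] at h2
    rw [inv_mul_cancel_left₀ hr0.ne',
      inv_mul_cancel_left₀ hr0.ne'] at h2
    have : 0 < r⁻¹ * g (r * c₁) (r * c₂) := by positivity
    linarith

/-- Suppose `(c, k)` is interior and `(c, y), (c, z)` are the two boundary points on the vertical
line through it. If `(c, y)` is on the line `αx + βy = 0` with `β > 0` and the boundary
point `(m, m')` further to the right is above this line, then `(c, y)` is the lower of the two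
boundary points, so `(c, z)` is above `(c, k)`. -/
lemma conjugate_above {g : ℝ → ℝ → ℝ} (h : Conc g) (h0 : g 0 0 = 0)
    {c k m m' y z α β : ℝ} (hc : 0 < c) (hk : 0 < g c k) (hm : g m m' = 0) (hcm : c < m)
    (hy : g c y = 0) (hβ : 0 < β) (hy0 : α * c + β * y = 0) (hmp : 0 < α * m + β * m')
    (hz : g c z = 0) (hzy : z ≠ y) : k < z := by
  have hm0 : 0 < m := hc.trans hcm
  -- the point with abscissa `c` on the chord from the origin to `(m, m')`
  have h1 := h 0 0 m m' (c / m) (by positivity) ((div_le_one hm0).2 hcm.le)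
  simp only [h0, hm, mul_zero, zero_add] at h1
  rw [div_mul_cancel₀ _ hm0.ne'] at h1
  have hZ : y < c / m * m' := by
    have : 0 < c / m * (α * m + β * m') := by positivity
    have e : c / m * (α * m + β * m') = α * c + β * (c / m * m') := by field_simp
    rw [e] at this
    have : β * y < β * (c / m * m') := by linarith
    exact lt_of_mul_lt_mul_left this hβ.le
  have hyk : y < k := by
    by_contra! hcon
    exact (h.not_between hk h1 hy).1 ⟨hcon, hZ⟩
  by_contra! hcon
  rcases lt_or_gt_of_ne hzy with h2 | h2
  · exact (h.not_between hk hz.ge hy).2 ⟨h2, hyk.le⟩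
  · exact (h.not_between hk hy.ge hz).2 ⟨h2, hcon⟩

/-- A point of `{g > 0}` left of `x = c₁` and one below `y = c₂` cannot both beat, for a
nonnegative functional, the boundary point `(c₁, z)` above the interior corner. -/
lemma le_conjugate {g : ℝ → ℝ → ℝ} (h : Conc g)
    {c₁ c₂ p p' q q' z v₁ v₂ : ℝ} (hv₁ : 0 ≤ v₁) (hv₂ : 0 ≤ v₂) (hK : 0 < g c₁ c₂)
    (hp : 0 < g p p') (hq : 0 < g q q') (hpc : p < c₁) (hqc : q' < c₂)
    (hz : g c₁ z = 0) (hcz : c₂ < z)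
    (hP : v₁ * c₁ + v₂ * z < v₁ * p + v₂ * p') (hQ : v₁ * c₁ + v₂ * z < v₁ * q + v₂ * q') :
    False := by
  have hqc1 : c₁ < q := by
    by_contra! hcon
    nlinarith
  have hA : 0 < q - p := by linarith
  set t := (c₁ - p) / (q - p) with ht
  have htm : t * (q - p) = c₁ - p := by rw [ht]; field_simp
  have ht0 : 0 < t := div_pos (by linarith) hA
  have ht1 : t < 1 := (div_lt_one hA).2 (by linarith)
  have h1 := h p p' q q' t ht0.le ht1.le
  have e : (1 - t) * p + t * q = c₁ := by linarith
  rw [e] at h1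
  have hpos : 0 < g c₁ ((1 - t) * p' + t * q') := by
    have := mul_pos (sub_pos.2 ht1) hp
    have := mul_pos ht0 hq
    linarith
  have hl : v₁ * c₁ + v₂ * z < v₁ * c₁ + v₂ * ((1 - t) * p' + t * q') := by
    have h3 := mul_lt_mul_of_pos_left hP (sub_pos.2 ht1)
    have h4 := mul_lt_mul_of_pos_left hQ ht0
    have e2 : (1 - t) * (v₁ * p + v₂ * p') + t * (v₁ * q + v₂ * q')
        = v₁ * c₁ + v₂ * ((1 - t) * p' + t * q') := by rw [← e]; ring
    linarith
  have hzlt : z < (1 - t) * p' + t * q' := by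
    by_contra! hcon
    have := mul_le_mul_of_nonneg_left hcon hv₂
    linarith
  exact (h.not_between hK hpos.le hz).1 ⟨hcz.le, hzlt⟩

/-! ### The form `γ` in coordinates -/

lemma gam_vec {S : Matrix (Fin 2) (Fin 2) ℝ} (hs : S.IsSymm) (μ θ : V) :
    gam S μ θ = -(1/2) * (S 0 0 * θ 0 ^ 2 + 2 * S 0 1 * θ 0 * θ 1 + S 1 1 * θ 1 ^ 2)
      - (μ 0 * θ 0 + μ 1 * θ 1) := by
  have h10 : S 1 0 = S 0 1 := hs.apply 0 1
  simp [gam, Matrix.mulVec, dotProduct, Fin.sum_univ_two, h10]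
  ring

lemma gam_eta (S : Matrix (Fin 2) (Fin 2) ℝ) (μ θ : V) :
    gam S μ ![θ 0, θ 1] = gam S μ θ := by
  congr 1
  ext i; fin_cases i <;> rfl

lemma entries_pos {S : Matrix (Fin 2) (Fin 2) ℝ} (hS : S.PosDef) (hs : S.IsSymm) :
    0 < S 0 0 ∧ 0 < S 1 1 ∧ 0 < S 0 0 * S 1 1 - S 0 1 ^ 2 := by
  have h10 : S 1 0 = S 0 1 := hs.apply 0 1
  refine ⟨hS.diag_pos, hS.diag_pos, ?_⟩
  have := hS.det_pos
  rw [Matrix.det_fin_two, h10] at this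
  nlinarith

lemma quad_ge {a b d : ℝ} (ha : 0 < a) (hd : 0 < d) (x y : ℝ) :
    (a * d - b ^ 2) / (a + d) * (x ^ 2 + y ^ 2) ≤ a * x ^ 2 + 2 * b * x * y + d * y ^ 2 := by
  rw [div_mul_eq_mul_div, div_le_iff₀ (by linarith)]
  nlinarith [sq_nonneg (a * x + b * y), sq_nonneg (b * x + d * y)]

lemma quad_pos {a b d : ℝ} (ha : 0 < a) (hd : 0 < d) (hdet : 0 < a * d - b ^ 2) {x y : ℝ}
    (h : 0 < x ^ 2 + y ^ 2) : 0 < a * x ^ 2 + 2 * b * x * y + d * y ^ 2 :=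
  lt_of_lt_of_le (by positivity) (quad_ge ha hd x y)

lemma gam_conc {S : Matrix (Fin 2) (Fin 2) ℝ} (hS : S.PosDef) (hs : S.IsSymm) (μ : V) :
    Conc (fun x y => gam S μ ![x, y]) := by
  intro x y x' y' t h0 h1
  obtain ⟨ha, hd, hdet⟩ := entries_pos hS hs
  have hq : 0 ≤ S 0 0 * (x - x') ^ 2 + 2 * S 0 1 * (x - x') * (y - y') + S 1 1 * (y - y') ^ 2 :=
    le_trans (by positivity) (quad_ge ha hd (x - x') (y - y'))
  have := mul_nonneg (mul_nonneg h0 (sub_nonneg.2 h1)) hq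
  simp only [gam_vec hs, Matrix.cons_val_zero, Matrix.cons_val_one]
  nlinarith

lemma gam_nhds {S : Matrix (Fin 2) (Fin 2) ℝ} {μ : V} {x y : ℝ} (h : 0 < gam S μ ![x, y]) :
    ∃ δ > 0, ∀ h' k, |h'| ≤ δ → |k| ≤ δ → 0 < gam S μ ![x + h', y + k] := by
  have hc : Continuous (fun z : ℝ × ℝ => gam S μ ![x + z.1, y + z.2]) := by
    simp only [gam, Matrix.mulVec, dotProduct, Fin.sum_univ_two, Matrix.cons_val_zero,
      Matrix.cons_val_one]
    fun_prop
  have ho : IsOpen {z : ℝ × ℝ | 0 < gam S μ ![x + z.1, y + z.2]} := isOpen_lt continuous_const hc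
  obtain ⟨ε, hε, hb⟩ := Metric.isOpen_iff.1 ho (0, 0) (by simpa using h)
  refine ⟨ε / 2, by positivity, fun h' k h1 h2 => hb (a := (h', k)) ?_⟩
  rw [Metric.mem_ball, Prod.dist_eq]
  simp only [Real.dist_eq, sub_zero]
  exact max_lt (by linarith) (by linarith)

/-- Every linear functional is bounded above on `Γ`. -/
lemma lin_bdd {S : Matrix (Fin 2) (Fin 2) ℝ} (hS : S.PosDef) (hs : S.IsSymm) (μ : V)
    (v : V) : ∃ C, ∀ θ, 0 < gam S μ θ → v ⬝ᵥ θ ≤ C := by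
  obtain ⟨ha, hd, hdet⟩ := entries_pos hS hs
  set l := (S 0 0 * S 1 1 - S 0 1 ^ 2) / (S 0 0 + S 1 1) with hl
  have hl0 : 0 < l := by positivity
  refine ⟨((v 0 - μ 0) ^ 2 + (v 1 - μ 1) ^ 2) / (2 * l), fun θ h => ?_⟩
  have hq := quad_ge (b := S 0 1) ha hd (θ 0) (θ 1)
  rw [← hl] at hq
  rw [gam_vec hs] at h
  rw [dotProduct, Fin.sum_univ_two, le_div_iff₀ (by positivity)]
  -- since `γ > 0`, `⟨v, θ⟩ ≤ ⟨v, θ⟩ + γ(θ) ≤ ⟨v - μ, θ⟩ - (l / 2)|θ|²`; complete the square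
  have h1 : v 0 * θ 0 + v 1 * θ 1 ≤
      (v 0 - μ 0) * θ 0 + (v 1 - μ 1) * θ 1 - l / 2 * (θ 0 ^ 2 + θ 1 ^ 2) := by linarith
  have h2 := mul_le_mul_of_nonneg_right h1 (by positivity : 0 ≤ 2 * l)
  nlinarith [sq_nonneg (v 0 - μ 0 - l * θ 0), sq_nonneg (v 1 - μ 1 - l * θ 1)]

/-- The nonzero point of `∂Γ` on the line through `p`. -/
lemma ray_zero {S : Matrix (Fin 2) (Fin 2) ℝ} (hS : S.PosDef) (μ p : V)
    (hμ : μ ⬝ᵥ p < 0) :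
    gam S μ ((-2 * (μ ⬝ᵥ p) / (p ⬝ᵥ S.mulVec p)) • p) = 0 ∧
      0 < -2 * (μ ⬝ᵥ p) / (p ⬝ᵥ S.mulVec p) := by
  have hp : p ≠ 0 := by rintro rfl; simp at hμ
  have hq : 0 < p ⬝ᵥ S.mulVec p := by
    have := hS.dotProduct_mulVec_pos hp
    simpa using this
  refine ⟨?_, div_pos (by linarith) hq⟩
  simp only [gam, Matrix.mulVec_smul, dotProduct_smul, smul_dotProduct, smul_eq_mul]
  field_simp
  ring

/-! ### The sets `𝒟⁽ⁱ⁾` and the corner -/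

lemma mem_D0 {S : Matrix (Fin 2) (Fin 2) ℝ} {μ θ : V} {c : ℝ} :
    θ ∈ Dset S μ 0 c ↔ ∃ x y, 0 < gam S μ ![x, y] ∧ θ 0 < x ∧ θ 1 < y ∧ x < c := by
  constructor
  · rintro ⟨w, hw, hlt, hc⟩
    exact ⟨w 0, w 1, by rw [gam_eta]; exact hw, hlt 0, hlt 1, hc⟩
  · rintro ⟨x, y, h, h0, h1, hc⟩
    exact ⟨![x, y], h, fun i => by fin_cases i <;> assumption, hc⟩

lemma mem_D1 {S : Matrix (Fin 2) (Fin 2) ℝ} {μ θ : V} {c : ℝ} :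
    θ ∈ Dset S μ 1 c ↔ ∃ x y, 0 < gam S μ ![x, y] ∧ θ 0 < x ∧ θ 1 < y ∧ y < c := by
  constructor
  · rintro ⟨w, hw, hlt, hc⟩
    exact ⟨w 0, w 1, by rw [gam_eta]; exact hw, hlt 0, hlt 1, hc⟩
  · rintro ⟨x, y, h, h0, h1, hc⟩
    exact ⟨![x, y], h, fun i => by fin_cases i <;> assumption, hc⟩

lemma Gam_subset_D {S : Matrix (Fin 2) (Fin 2) ℝ} {μ θ : V} {i : Fin 2} {c : ℝ}
    (h : 0 < gam S μ θ) (hc : θ i < c) : θ ∈ Dset S μ i c := by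
  rw [← gam_eta] at h
  obtain ⟨δ, hδ, hb⟩ := gam_nhds h
  have he : 0 < min δ ((c - θ i) / 2) := lt_min hδ (by linarith)
  have he1 := min_le_left δ ((c - θ i) / 2)
  have he2 := min_le_right δ ((c - θ i) / 2)
  set e := min δ ((c - θ i) / 2)
  have := hb e e (by rwa [abs_of_pos he]) (by rwa [abs_of_pos he])
  refine ⟨![θ 0 + e, θ 1 + e], this, fun j => by fin_cases j <;> simpa using he, ?_⟩
  fin_cases i <;> simp at he2 hc ⊢ <;> linarith

lemma D_bdd {S : Matrix (Fin 2) (Fin 2) ℝ} (hS : S.PosDef) (hs : S.IsSymm) (μ : V)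
    {v : V} (hv0 : 0 ≤ v 0) (hv1 : 0 ≤ v 1) (i : Fin 2) (c : ℝ) :
    BddAbove ((fun θ => v ⬝ᵥ θ) '' Dset S μ i c) := by
  obtain ⟨C, hC⟩ := lin_bdd hS hs μ v
  refine ⟨C, ?_⟩
  rintro _ ⟨θ, ⟨w, hw, hlt, -⟩, rfl⟩
  refine le_trans ?_ (hC w hw)
  simp only [dotProduct, Fin.sum_univ_two]
  exact add_le_add (mul_le_mul_of_nonneg_left (hlt 0).le hv0)
    (mul_le_mul_of_nonneg_left (hlt 1).le hv1)

lemma D_coord_lt {S : Matrix (Fin 2) (Fin 2) ℝ} {μ θ : V} {i : Fin 2} {c : ℝ}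
    (h : θ ∈ Dset S μ i c) : θ i < c := by
  obtain ⟨w, -, hlt, hc⟩ := h
  exact (hlt i).trans hc

/-- Points `-εμ` with small `ε > 0` lie in `Γ` and below any positive levels. -/
lemma D_inter_nonempty {S : Matrix (Fin 2) (Fin 2) ℝ} (hS : S.PosDef) (hs : S.IsSymm) {μ : V}
    (hμ : μ ≠ 0) {c₁ c₂ : ℝ} (hc₁ : 0 < c₁) (hc₂ : 0 < c₂) :
    (Dset S μ 0 c₁ ∩ Dset S μ 1 c₂).Nonempty := by
  have hsq : 0 < μ 0 ^ 2 + μ 1 ^ 2 := by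
    by_contra! hcon
    apply hμ
    have h0 : μ 0 = 0 := by nlinarith [sq_nonneg (μ 0), sq_nonneg (μ 1)]
    have h1 : μ 1 = 0 := by nlinarith [sq_nonneg (μ 0), sq_nonneg (μ 1)]
    ext i; fin_cases i
    · exact h0
    · exact h1
  obtain ⟨ha, hd, hdet⟩ := entries_pos hS hs
  have hQ := quad_pos ha hd hdet hsq
  set Q := S 0 0 * μ 0 ^ 2 + 2 * S 0 1 * μ 0 * μ 1 + S 1 1 * μ 1 ^ 2 with hQd
  have hm0 : 0 < |μ 0| + 1 := by positivity
  have hm1 : 0 < |μ 1| + 1 := by positivity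
  obtain ⟨e, he, hlt⟩ := exists_between (show 0 < min ((μ 0 ^ 2 + μ 1 ^ 2) / Q)
    (min (c₁ / (|μ 0| + 1)) (c₂ / (|μ 1| + 1))) by positivity)
  simp only [lt_min_iff] at hlt
  obtain ⟨h1, h2, h3⟩ := hlt
  rw [lt_div_iff₀ (by positivity)] at h1 h2 h3
  have hg : 0 < gam S μ ((-e) • μ) := by
    rw [gam_vec hs]
    simp only [Pi.smul_apply, smul_eq_mul]
    have : e * (e * Q) < e * (μ 0 ^ 2 + μ 1 ^ 2) := mul_lt_mul_of_pos_left h1 he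
    rw [hQd] at this
    nlinarith [mul_pos he hsq]
  refine ⟨(-e) • μ, Gam_subset_D hg ?_, Gam_subset_D hg ?_⟩
  · simp only [Pi.smul_apply, smul_eq_mul]
    nlinarith [mul_le_mul_of_nonneg_left (neg_abs_le (μ 0)) he.le]
  · simp only [Pi.smul_apply, smul_eq_mul]
    nlinarith [mul_le_mul_of_nonneg_left (neg_abs_le (μ 1)) he.le]

lemma coord_bdd {S : Matrix (Fin 2) (Fin 2) ℝ} {μ : V} {c : Fin 2 → ℝ} (i : Fin 2) :
    BddAbove ((fun θ : V => θ i) '' (Dset S μ 0 (c 0) ∩ Dset S μ 1 (c 1))) := by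
  refine ⟨c i, ?_⟩
  rintro _ ⟨θ, ⟨h0, h1⟩, rfl⟩
  fin_cases i
  · exact (D_coord_lt h0).le
  · exact (D_coord_lt h1).le

/-- If the corner lies in `Γ`, it is the vector of coordinate suprema of `𝒟⁽¹⁾ ∩ 𝒟⁽²⁾`. -/
lemma sup_eq_corner {S : Matrix (Fin 2) (Fin 2) ℝ} {μ : V} {c τ : V}
    (hne : (Dset S μ 0 (c 0) ∩ Dset S μ 1 (c 1)).Nonempty)
    (hτ : ∀ i, τ i = sSup ((fun θ => θ i) '' (Dset S μ 0 (c 0) ∩ Dset S μ 1 (c 1))))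
    (hc : 0 < gam S μ c) : τ = c := by
  rw [← gam_eta] at hc
  obtain ⟨δ, hδ, hb⟩ := gam_nhds hc
  have hmem : ∀ e, 0 < e → e ≤ δ →
      (![c 0 - e, c 1 - e] : V) ∈ Dset S μ 0 (c 0) ∩ Dset S μ 1 (c 1) := by
    intro e he hle
    have := hb (-e) (-e) (by rwa [abs_neg, abs_of_pos he]) (by rwa [abs_neg, abs_of_pos he])
    exact ⟨Gam_subset_D this (by simpa using he), Gam_subset_D this (by simpa using he)⟩
  ext i
  rw [hτ i]
  refine le_antisymm (csSup_le (hne.image _) ?_) ?_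
  · rintro _ ⟨θ, ⟨h0, h1⟩, rfl⟩
    fin_cases i
    · exact (D_coord_lt h0).le
    · exact (D_coord_lt h1).le
  · refine le_of_forall_pos_sub_le fun ε hε => ?_
    have h := le_csSup (coord_bdd i) (mem_image_of_mem (fun θ : V => θ i)
      (hmem (min ε δ) (lt_min hε hδ) (min_le_right _ _)))
    refine le_trans ?_ h
    have := min_le_left ε δ
    fin_cases i <;> simp <;> linarith

/-- If the vector `τ` of coordinate suprema lies in `Γ`, it equals the corner: were one coordinate
of `τ` smaller than the corner's, `Γ` would contain a point of the open box exceeding `τ` in that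
coordinate. -/
lemma corner_mem_of_sup_mem {S : Matrix (Fin 2) (Fin 2) ℝ} {μ : V} {c τ : V}
    (hne : (Dset S μ 0 (c 0) ∩ Dset S μ 1 (c 1)).Nonempty)
    (hτ : ∀ i, τ i = sSup ((fun θ => θ i) '' (Dset S μ 0 (c 0) ∩ Dset S μ 1 (c 1))))
    (hmem : 0 < gam S μ τ) : 0 < gam S μ c := by
  have hle : ∀ i, τ i ≤ c i := by
    intro i
    rw [hτ i]
    refine csSup_le (hne.image _) ?_
    rintro _ ⟨θ, ⟨h0, h1⟩, rfl⟩
    fin_cases i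
    · exact (D_coord_lt h0).le
    · exact (D_coord_lt h1).le
  have hub : ∀ θ ∈ Dset S μ 0 (c 0) ∩ Dset S μ 1 (c 1), ∀ i, θ i ≤ τ i := by
    intro θ hθ i
    rw [hτ i]
    exact le_csSup (coord_bdd i) (mem_image_of_mem (fun θ : V => θ i) hθ)
  have hmem' := hmem
  rw [← gam_eta] at hmem'
  obtain ⟨δ, hδ, hb⟩ := gam_nhds hmem'
  have h0 : c 0 ≤ τ 0 := by
    by_contra! hlt
    obtain ⟨e, he, hl⟩ := exists_between (show 0 < min δ (c 0 - τ 0) from lt_min hδ (by linarith))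
    obtain ⟨hl1, hl2⟩ := lt_min_iff.1 hl
    have hg := hb e (-e) (by rw [abs_of_pos he]; exact hl1.le)
      (by rw [abs_neg, abs_of_pos he]; exact hl1.le)
    have := hub _ ⟨Gam_subset_D hg (by simp; linarith),
      Gam_subset_D hg (by simp; linarith [hle 1])⟩ 0
    simp at this
    linarith
  have h1 : c 1 ≤ τ 1 := by
    by_contra! hlt
    obtain ⟨e, he, hl⟩ := exists_between (show 0 < min δ (c 1 - τ 1) from lt_min hδ (by linarith))
    obtain ⟨hl1, hl2⟩ := lt_min_iff.1 hl
    have hg := hb (-e) e (by rw [abs_neg, abs_of_pos he]; exact hl1.le)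
      (by rw [abs_of_pos he]; exact hl1.le)
    have := hub _ ⟨Gam_subset_D hg (by simp; linarith [hle 0]),
      Gam_subset_D hg (by simp; linarith)⟩ 1
    simp at this
    linarith
  have : τ = c := by
    ext i; fin_cases i
    · exact le_antisymm (hle 0) h0
    · exact le_antisymm (hle 1) h1
  rwa [← this]

/-- A point of `Γ` with a positive coordinate is strictly beaten in that coordinate by the point of
`∂Γ` on the ray through it. -/
lemma exists_boundary_gt {S : Matrix (Fin 2) (Fin 2) ℝ} (hS : S.PosDef) {μ c : V}
    (hc : 0 < gam S μ c) {i : Fin 2} (hi : 0 < c i) : ∃ θ, gam S μ θ = 0 ∧ c i < θ i := by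
  have hne : c ≠ 0 := by rintro rfl; simp at hi
  have hq : 0 < c ⬝ᵥ S.mulVec c := by
    have := hS.dotProduct_mulVec_pos hne
    simpa using this
  have hc' : 0 < -(1/2) * (c ⬝ᵥ S.mulVec c) - μ ⬝ᵥ c := hc
  refine ⟨_, (ray_zero hS μ c (by linarith)).1, ?_⟩
  have : 1 < -2 * (μ ⬝ᵥ c) / (c ⬝ᵥ S.mulVec c) := (one_lt_div hq).2 (by linarith)
  simp only [Pi.smul_apply, smul_eq_mul]
  nlinarith

/-! ### The suprema over `𝒟⁽¹⁾`, `𝒟⁽²⁾` and their intersection -/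

lemma inf_sup_eq_of_corner_notMem {S : Matrix (Fin 2) (Fin 2) ℝ} (hS : S.PosDef)
    (hs : S.IsSymm) {μ : V} {c v : V}
    (hne : (Dset S μ 0 (c 0) ∩ Dset S μ 1 (c 1)).Nonempty)
    (hc0 : 0 < c 0) (hc1 : 0 < c 1) (hv0 : 0 ≤ v 0) (hv1 : 0 ≤ v 1) (hK : ¬ 0 < gam S μ c) :
    min (sSup ((fun θ => v ⬝ᵥ θ) '' Dset S μ 0 (c 0)))
          (sSup ((fun θ => v ⬝ᵥ θ) '' Dset S μ 1 (c 1))) =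
        sSup ((fun θ => v ⬝ᵥ θ) '' (Dset S μ 0 (c 0) ∩ Dset S μ 1 (c 1))) := by
  have hb0 := D_bdd hS hs μ hv0 hv1 0 (c 0)
  have hb1 := D_bdd hS hs μ hv0 hv1 1 (c 1)
  have hb := hb0.mono (image_mono (f := fun θ => v ⬝ᵥ θ)
    (inter_subset_left (s := Dset S μ 0 (c 0)) (t := Dset S μ 1 (c 1))))
  apply le_antisymm
  · by_contra! hcon
    obtain ⟨h0, h1⟩ := lt_min_iff.1 hcon
    obtain ⟨_, ⟨P, hP, rfl⟩, hP'⟩ :=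
      exists_lt_of_lt_csSup ((hne.mono inter_subset_left).image _) h0
    obtain ⟨_, ⟨Q, hQ, rfl⟩, hQ'⟩ :=
      exists_lt_of_lt_csSup ((hne.mono inter_subset_right).image _) h1
    have hno : ∀ Z ∈ Dset S μ 0 (c 0) ∩ Dset S μ 1 (c 1), v ⬝ᵥ Z ≤
        sSup ((fun θ => v ⬝ᵥ θ) '' (Dset S μ 0 (c 0) ∩ Dset S μ 1 (c 1))) :=
      fun Z hZ => le_csSup hb (mem_image_of_mem _ hZ)
    obtain ⟨p, p', hp, hp0, hp1, hpc⟩ := mem_D0.1 hP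
    obtain ⟨q, q', hq, hq0, hq1, hqc⟩ := mem_D1.1 hQ
    rcases lt_or_ge p' (c 1) with hpc' | hpc'
    · exact absurd (hno P ⟨hP, mem_D1.2 ⟨p, p', hp, hp0, hp1, hpc'⟩⟩) (not_le.2 hP')
    rcases lt_or_ge q (c 0) with hqc' | hqc'
    · exact absurd (hno Q ⟨mem_D0.2 ⟨q, q', hq, hq0, hq1, hqc'⟩, hQ⟩) (not_le.2 hQ')
    rcases segment_below_or_corner (gam_conc hS hs μ) (by simp [gam_vec hs]) hc0 hc1 hp hq hpc
      hqc' hqc hpc' with ⟨t, ht0, ht1, hx, hy⟩ | h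
    · have hg : 0 < gam S μ ![(1 - t) * p + t * q, (1 - t) * p' + t * q'] := by
        refine lt_of_lt_of_le ?_ (gam_conc hS hs μ p p' q q' t ht0 ht1)
        rcases ht1.lt_or_eq with h2 | h2
        · have := mul_pos (sub_pos.2 h2) hp
          have := mul_nonneg ht0 hq.le
          linarith
        · rw [h2]; linarith
      have hconv : ∀ {a b a' b' : ℝ}, a < a' → b < b' →
          (1 - t) * a + t * b < (1 - t) * a' + t * b' := by
        intro a b a' b' h1 h2
        rcases ht1.lt_or_eq with h3 | h3
        · have := mul_lt_mul_of_pos_left h1 (sub_pos.2 h3)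
          have := mul_le_mul_of_nonneg_left h2.le ht0
          linarith
        · rw [h3]; linarith
      have hZ := hno ((1 - t) • P + t • Q)
        ⟨mem_D0.2 ⟨_, _, hg, by simpa using hconv hp0 hq0, by simpa using hconv hp1 hq1, hx⟩,
         mem_D1.2 ⟨_, _, hg, by simpa using hconv hp0 hq0, by simpa using hconv hp1 hq1, hy⟩⟩
      have := hconv hP' hQ'
      simp only [dotProduct_add, dotProduct_smul, smul_eq_mul] at hZ
      linarith
    · exact hK (by rwa [gam_eta] at h)
  · exact le_min (csSup_le_csSup hb0 (hne.image _) (image_mono inter_subset_left))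
      (csSup_le_csSup hb1 (hne.image _) (image_mono inter_subset_right))

/-- A point of `∂Γ` with `i`-th coordinate `cᵢ` is a limit of points of `Γ` with smaller `i`-th
coordinate, along a segment ending in the open set `Γ`. -/
lemma le_sup_of_boundary {S : Matrix (Fin 2) (Fin 2) ℝ} (hS : S.PosDef) (hs : S.IsSymm)
    {μ c v T : V} (hv0 : 0 ≤ v 0) (hv1 : 0 ≤ v 1) {i : Fin 2}
    (hK : 0 < gam S μ c) (hT : gam S μ T = 0) (hTc : T i = c i) :
    v ⬝ᵥ T ≤ sSup ((fun θ => v ⬝ᵥ θ) '' Dset S μ i (c i)) := by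
  rw [← gam_eta] at hK hT
  obtain ⟨δ, hδ, hb⟩ := gam_nhds hK
  have hA := hb (-δ) (-δ) (by rw [abs_neg, abs_of_pos hδ]) (by rw [abs_neg, abs_of_pos hδ])
  set A : V := ![c 0 + -δ, c 1 + -δ] with hAd
  have hAi : A i < c i := by fin_cases i <;> simp [hAd, hδ]
  rw [← gam_eta] at hA
  set M := sSup ((fun θ => v ⬝ᵥ θ) '' Dset S μ i (c i))
  have hle : ∀ e, 0 < e → e ≤ 1 → (1 - e) * (v ⬝ᵥ T) + e * (v ⬝ᵥ A) ≤ M := by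
    intro e he he1
    have h1 := gam_conc hS hs μ (T 0) (T 1) (A 0) (A 1) e he.le he1
    simp only [hT, mul_zero, zero_add] at h1
    have h2 : 0 < gam S μ ((1 - e) • T + e • A) := by
      rw [← gam_eta]
      refine lt_of_lt_of_le (mul_pos he hA) ?_
      simpa using h1
    have h3 : ((1 - e) • T + e • A) i < c i := by
      simp only [Pi.add_apply, Pi.smul_apply, smul_eq_mul, hTc]
      nlinarith
    have := le_csSup (D_bdd hS hs μ hv0 hv1 i (c i))
      (mem_image_of_mem (fun θ => v ⬝ᵥ θ) (Gam_subset_D h2 h3))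
    rwa [dotProduct_add, dotProduct_smul, dotProduct_smul, smul_eq_mul, smul_eq_mul] at this
  by_contra! hcon
  have hAM : v ⬝ᵥ A ≤ M := by simpa using hle 1 one_pos le_rfl
  have hd : 0 < v ⬝ᵥ T - v ⬝ᵥ A := by linarith
  -- half the parameter at which the segment reaches level `M`
  have := hle ((v ⬝ᵥ T - M) / (v ⬝ᵥ T - v ⬝ᵥ A) / 2)
    (by have : 0 < v ⬝ᵥ T - M := by linarith
        positivity)
    (by have : (v ⬝ᵥ T - M) / (v ⬝ᵥ T - v ⬝ᵥ A) ≤ 1 := (div_le_one hd).2 (by linarith)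
        linarith)
  have e : (v ⬝ᵥ T - M) / (v ⬝ᵥ T - v ⬝ᵥ A) * (v ⬝ᵥ T - v ⬝ᵥ A) = v ⬝ᵥ T - M := by
    field_simp
  linarith

lemma inf_sup_eq_of_corner_mem {S : Matrix (Fin 2) (Fin 2) ℝ} (hS : S.PosDef)
    (hs : S.IsSymm) {μ : V} {c v T₁ T₂ : V}
    (hne : (Dset S μ 0 (c 0) ∩ Dset S μ 1 (c 1)).Nonempty)
    (hv0 : 0 ≤ v 0) (hv1 : 0 ≤ v 1) (hK : 0 < gam S μ c)
    (hT₁ : gam S μ T₁ = 0) (hT₁0 : T₁ 0 = c 0) (hT₁1 : c 1 < T₁ 1)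
    (hT₂ : gam S μ T₂ = 0) (hT₂1 : T₂ 1 = c 1) (hT₂0 : c 0 < T₂ 0) :
    min (sSup ((fun θ => v ⬝ᵥ θ) '' Dset S μ 0 (c 0)))
          (sSup ((fun θ => v ⬝ᵥ θ) '' Dset S μ 1 (c 1))) = min (v ⬝ᵥ T₁) (v ⬝ᵥ T₂) := by
  have hK' := hK
  rw [← gam_eta] at hK' hT₁ hT₂
  rw [hT₁0] at hT₁
  rw [hT₂1] at hT₂
  apply le_antisymm
  · refine le_min ?_ ?_
    all_goals
      by_contra! hcon
      obtain ⟨h0, h1⟩ := lt_min_iff.1 hcon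
      obtain ⟨_, ⟨P, hP, rfl⟩, hP'⟩ :=
        exists_lt_of_lt_csSup ((hne.mono inter_subset_left).image _) h0
      obtain ⟨_, ⟨Q, hQ, rfl⟩, hQ'⟩ :=
        exists_lt_of_lt_csSup ((hne.mono inter_subset_right).image _) h1
      obtain ⟨p, p', hp, hp0, hp1, hpc⟩ := mem_D0.1 hP
      obtain ⟨q, q', hq, hq0, hq1, hqc⟩ := mem_D1.1 hQ
      simp only [dotProduct, Fin.sum_univ_two] at hP' hQ'
      have e1 := mul_le_mul_of_nonneg_left hp0.le hv0
      have e2 := mul_le_mul_of_nonneg_left hp1.le hv1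
      have e3 := mul_le_mul_of_nonneg_left hq0.le hv0
      have e4 := mul_le_mul_of_nonneg_left hq1.le hv1
    · rw [hT₁0] at hP' hQ'
      exact le_conjugate (gam_conc hS hs μ) hv0 hv1 hK' hp hq hpc hqc hT₁ hT₁1
        (by linarith) (by linarith)
    · rw [hT₂1] at hP' hQ'
      exact le_conjugate (gam_conc hS hs μ).swap hv1 hv0 hK' hq hp hqc hpc hT₂ hT₂0
        (by linarith) (by linarith)
  · rw [gam_eta S μ c] at hK'
    refine le_min (min_le_of_left_le ?_) (min_le_of_right_le ?_)
    · exact le_sup_of_boundary hS hs hv0 hv1 hK (by rw [← gam_eta, hT₁0]; exact hT₁) hT₁0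
    · exact le_sup_of_boundary hS hs hv0 hv1 hK (by rw [← gam_eta, hT₂1]; exact hT₂) hT₂1

/-- the rate function `min(I⁽¹⁾(v), I⁽²⁾(v))` in terms of `𝒟 = 𝒟^(1) ∩ 𝒟^(2)`
(Theorem 3.2(b)). -/
theorem stmt_4
    (S R : Matrix (Fin 2) (Fin 2) ℝ) (μ : V)
    (hSpd : S.PosDef) (hSsym : S.IsSymm) (hμ : μ ≠ 0)
    (hP : condP R) (hS : condS μ R)
    (θmax1 θmax2 tθ1r tθ2r : V)
    (hmax1 : gam S μ θmax1 = 0 ∧ ∀ θ, gam S μ θ = 0 → θ 0 ≤ θmax1 0)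
    (hmax2 : gam S μ θmax2 = 0 ∧ ∀ θ, gam S μ θ = 0 → θ 1 ≤ θmax2 1)
    (htθ1r : (θray1 S μ R = θmax1 ∧ tθ1r = θmax1) ∨
      (θray1 S μ R ≠ θmax1 ∧ gam S μ tθ1r = 0 ∧
        tθ1r 0 = θray1 S μ R 0 ∧ tθ1r 1 ≠ θray1 S μ R 1))
    (htθ2r : (θray2 S μ R = θmax2 ∧ tθ2r = θmax2) ∨
      (θray2 S μ R ≠ θmax2 ∧ gam S μ tθ2r = 0 ∧
        tθ2r 1 = θray2 S μ R 1 ∧ tθ2r 0 ≠ θray2 S μ R 0))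
    (θΓ1 θΓ2 : V)
    (hθΓ1 : θΓ1 = if gam2 R θmax1 ≤ 0 then θmax1 else θray1 S μ R)
    (hθΓ2 : θΓ2 = if gam1 R θmax2 ≤ 0 then θmax2 else θray2 S μ R)
    (τ : V)
    (hτ : ∀ i, τ i = sSup ((fun θ => θ i) ''
      (Dset S μ 0 (θΓ1 0) ∩ Dset S μ 1 (θΓ2 1))))
    (v : V) (hv1 : 0 ≤ v 0) (hv2 : 0 ≤ v 1) :
    (τ ∉ Gam S μ →
      min (sSup ((fun θ => v ⬝ᵥ θ) '' Dset S μ 0 (θΓ1 0)))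
          (sSup ((fun θ => v ⬝ᵥ θ) '' Dset S μ 1 (θΓ2 1))) =
        sSup ((fun θ => v ⬝ᵥ θ) '' (Dset S μ 0 (θΓ1 0) ∩ Dset S μ 1 (θΓ2 1)))) ∧
    (τ ∈ Gam S μ →
      min (sSup ((fun θ => v ⬝ᵥ θ) '' Dset S μ 0 (θΓ1 0)))
          (sSup ((fun θ => v ⬝ᵥ θ) '' Dset S μ 1 (θΓ2 1))) =
        min (v ⬝ᵥ tθ1r) (v ⬝ᵥ tθ2r)) := by

  obtain ⟨hr00, hr11, hdet⟩ := hP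
  obtain ⟨hS1, hS2⟩ := hS
  have h00 : gam S μ ![0, 0] = 0 := by simp [gam_vec hSsym]
  obtain ⟨hz1, hk1⟩ := ray_zero hSpd μ (pvec1 R)
    (by simp [pvec1, dotProduct, Fin.sum_univ_two]; linarith)
  obtain ⟨hz2, hk2⟩ := ray_zero hSpd μ (pvec2 R)
    (by simp [pvec2, dotProduct, Fin.sum_univ_two]; linarith)
  change gam S μ (θray1 S μ R) = 0 at hz1
  change gam S μ (θray2 S μ R) = 0 at hz2
  have hray1 : 0 < θray1 S μ R 0 := by
    have : θray1 S μ R 0 = _ * R 1 1 := rfl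
    rw [this]; exact mul_pos hk1 hr11
  have hray2 : 0 < θray2 S μ R 1 := by
    have : θray2 S μ R 1 = _ * R 0 0 := rfl
    rw [this]; exact mul_pos hk2 hr00
  have hg2 : R 0 1 * θray1 S μ R 0 + R 1 1 * θray1 S μ R 1 = 0 := by
    simp [θray1, pvec1]; ring
  have hg1 : R 1 0 * θray2 S μ R 1 + R 0 0 * θray2 S μ R 0 = 0 := by
    simp [θray2, pvec2]; ring
  have hM1 := hmax1.2 _ hz1
  have hM2 := hmax2.2 _ hz2
  have hc1 : 0 < θΓ1 0 := by
    rw [hθΓ1]; split_ifs <;> linarith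
  have hc2 : 0 < θΓ2 1 := by
    rw [hθΓ2]; split_ifs <;> linarith
  obtain ⟨c, hc0e, hc1e⟩ : ∃ c : V, θΓ1 0 = c 0 ∧ θΓ2 1 = c 1 := ⟨![θΓ1 0, θΓ2 1], rfl, rfl⟩
  rw [hc0e, hc1e] at hτ ⊢
  rw [hc0e] at hc1
  rw [hc1e] at hc2
  have hne := D_inter_nonempty hSpd hSsym hμ hc1 hc2
  constructor
  · intro hτG
    refine inf_sup_eq_of_corner_notMem hSpd hSsym hne hc1 hc2 hv1 hv2 fun hK => hτG ?_
    rw [sup_eq_corner hne hτ hK]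
    exact hK
  · intro hτG
    have hK := corner_mem_of_sup_mem hne hτ hτG
    have hK' := hK
    rw [← gam_eta] at hK'
    obtain ⟨w, hw0, hw⟩ := exists_boundary_gt hSpd hK hc1
    have hcM1 : c 0 < θmax1 0 := hw.trans_le (hmax1.2 w hw0)
    obtain ⟨w', hw0', hw'⟩ := exists_boundary_gt hSpd hK hc2
    have hcM2 : c 1 < θmax2 1 := hw'.trans_le (hmax2.2 w' hw0')
    have hpos1 : 0 < gam2 R θmax1 ∧ θΓ1 = θray1 S μ R := by
      split_ifs at hθΓ1 with hif
      · rw [hθΓ1] at hc0e; linarith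
      · exact ⟨not_le.1 hif, hθΓ1⟩
    have hpos2 : 0 < gam1 R θmax2 ∧ θΓ2 = θray2 S μ R := by
      split_ifs at hθΓ2 with hif
      · rw [hθΓ2] at hc1e; linarith
      · exact ⟨not_le.1 hif, hθΓ2⟩
    rw [hpos1.2] at hc0e
    rw [hpos2.2] at hc1e
    rcases htθ1r with ⟨he, -⟩ | ⟨-, ht1, ht10, ht11⟩
    · rw [← he] at hcM1; linarith
    rcases htθ2r with ⟨he, -⟩ | ⟨-, ht2, ht21, ht20⟩
    · rw [← he] at hcM2; linarith
    rw [hc0e] at ht10 hg2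
    rw [hc1e] at ht21 hg1
    refine inf_sup_eq_of_corner_mem hSpd hSsym hne hv1 hv2 hK ht1 ht10 ?_ ht2 ht21 ?_
    · refine conjugate_above (gam_conc hSpd hSsym μ) h00 hc1 hK' ?_ hcM1 ?_ hr11 hg2
        hpos1.1 ?_ ht11
      · rw [gam_eta]; exact hmax1.1
      · rw [← hc0e, gam_eta]; exact hz1
      · rw [← ht10, gam_eta]; exact ht1
    · refine conjugate_above (gam_conc hSpd hSsym μ).swap h00 hc2 hK' (m' := θmax2 0)
        ?_ hcM2 ?_ hr00 hg1 ?_ ?_ ht20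
      · rw [gam_eta]; exact hmax2.1
      · rw [← hc1e, gam_eta]; exact hz2
      · have := hpos2.1
        rw [gam1] at this
        linarith
      · rw [← ht21, gam_eta]; exact ht2
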